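/- arXiv:1310.5572 — 2 statements merged into one kernel-verified Lean document; each statement's English description precedes it below -/
import Mathlib

section
/- Let (X_i)_{i∈ℕ} be a family of sets with X_i nonempty for every i ≥ 2. Let A ⊆ X₀ and let T ⊆ X₁ be nonempty. Let (n_j)_{j∈J} be a family of positive natural numbers and, for each j ∈ J and each i < n_j, let W_{j,i} be a nonempty subset of X_i. If {f ∈ ∏_{i∈ℕ} X_i | f 0 ∈ A ∧ f 1 ∈ T} = ⋃_{j∈J} {f ∈ ∏_{i∈ℕ} X_i | ∀ i < n_j, f i ∈ W_{j,i}}, then A = ⋃_{j∈J} W_{j,0}. -/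
/-!
Every point of the first factor that lies in `A`, or in some `W j 0`, extends to a point of the
corresponding cylinder: the remaining constrained coordinates are chosen in the nonempty sets
`T` or `W j i`, and the unconstrained ones in the nonempty factors. The equality of the two sets
moves this point to the other side, and its coordinate `0` gives the required membership.
-/


/-- Cancellation lemma for countable products: the first factor of a cylinder is
recovered from an equality between a rank-2 cylinder and a union of
initial-segment cylinders with nonempty entries. -/
theorem first_factor_of_cylinder_eq_iUnion
    (X : ℕ → Type*) (hX : ∀ i, 2 ≤ i → Nonempty (X i))
    (A : Set (X 0)) (T : Set (X 1)) (hT : T.Nonempty)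
    {J : Type*} (n : J → ℕ) (hn : ∀ j, 0 < n j)
    (W : ∀ _ : J, ∀ i : ℕ, Set (X i))
    (hW : ∀ j, ∀ i < n j, (W j i).Nonempty)
    (h : {f : ∀ i, X i | f 0 ∈ A ∧ f 1 ∈ T} =
      ⋃ j, {f : ∀ i, X i | ∀ i < n j, f i ∈ W j i}) :
    A = ⋃ j, W j 0 := by
  obtain ⟨t, ht⟩ := hT
  -- A point of `X 0` extends to a point of the product, since `t` inhabits `X 1`.
  have ne : X 0 → ∀ i, Nonempty (X i) := fun x i =>
    match i with
    | 0 => ⟨x⟩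
    | 1 => ⟨t⟩
    | k + 2 => hX (k + 2) (by omega)
  ext x
  rw [Set.mem_iUnion]
  constructor
  · intro hx
    let c : ∀ i, X i := fun i => (ne x i).some
    let f : ∀ i, X i := Function.update (Function.update c 1 t) 0 x
    have hf : f ∈ {f : ∀ i, X i | f 0 ∈ A ∧ f 1 ∈ T} := by
      simp [f, hx, ht]
    rw [h, Set.mem_iUnion] at hf
    obtain ⟨j, hj⟩ := hf
    exact ⟨j, by simpa [f] using hj 0 (hn j)⟩
  · rintro ⟨j, hx⟩
    have hc : ∀ i, ∃ y : X i, i < n j → y ∈ W j i := fun i => by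
      by_cases hi : i < n j
      · obtain ⟨y, hy⟩ := hW j i hi
        exact ⟨y, fun _ => hy⟩
      · obtain ⟨y⟩ := ne x i
        exact ⟨y, fun hi' => absurd hi' hi⟩
    choose c hc using hc
    let f : ∀ i, X i := Function.update c 0 x
    have hf : f ∈ ⋃ j, {f : ∀ i, X i | ∀ i < n j, f i ∈ W j i} := by
      refine Set.mem_iUnion.2 ⟨j, fun i hi => ?_⟩
      obtain rfl | h0 := eq_or_ne i 0
      · simpa [f] using hx
      · simpa [f, h0] using hc i hi
    rw [← h] at hf
    simpa [f] using hf.1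
end

section
/- Let X₁, X₂ be sets, K₁ ⊆ X₁, K₂ ⊆ X₂, and let I be a finite index set with U_i ⊆ X₁ and V_i ⊆ X₂ for each i ∈ I. Then K₁ × K₂ ⊆ ⋃_{i∈I} (U_i × V_i) if and only if there exists a collection 𝒥 of subsets of I such that K₁ ⊆ ⋃_{J∈𝒥} ⋂_{j∈J} U_j and K₂ ⊆ ⋃_{j∈J} V_j for every J ∈ 𝒥 (equivalently, K₂ ⊆ ⋂_{J∈𝒥} ⋃_{j∈J} V_j). -/
/-- Central combinatorial equivalence of the binary computable Tychonoff
theorem: a finite family of rectangles covers `K₁ ×ˢ K₂` iff there is a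
collection `𝒥` of subsets of the index set with
`K₁ ⊆ ⋃ J ∈ 𝒥, ⋂ j ∈ J, U j` and `K₂ ⊆ ⋃ j ∈ J, V j` for every `J ∈ 𝒥`. -/
theorem prod_subset_iUnion_prod_iff_exists_collection
    {X₁ X₂ : Type*} (K₁ : Set X₁) (K₂ : Set X₂)
    {I : Type*} [Finite I] (U : I → Set X₁) (V : I → Set X₂) :
    K₁ ×ˢ K₂ ⊆ ⋃ i, U i ×ˢ V i ↔
      ∃ 𝒥 : Set (Set I),
        (K₁ ⊆ ⋃ J ∈ 𝒥, ⋂ j ∈ J, U j) ∧ ∀ J ∈ 𝒥, K₂ ⊆ ⋃ j ∈ J, V j := by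
  constructor
  · intro h
    -- The largest admissible collection; `x ∈ K₁` lies in the member `{i | x ∈ U i}`,
    -- which is admissible because the slice `{x} ×ˢ K₂` is covered by the rectangles.
    refine ⟨{J | K₂ ⊆ ⋃ j ∈ J, V j}, fun x hx => ?_, fun J hJ => hJ⟩
    refine Set.mem_biUnion (x := {i | x ∈ U i}) (fun y hy => ?_)
      (Set.mem_iInter₂.2 fun i hi => hi)
    obtain ⟨i, hi⟩ := Set.mem_iUnion.1 (h (Set.mk_mem_prod hx hy))
    exact Set.mem_biUnion (x := i) hi.1 hi.2
  · rintro ⟨𝒥, h₁, h₂⟩ ⟨x, y⟩ ⟨hx, hy⟩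
    obtain ⟨J, hJ, hxJ⟩ := Set.mem_iUnion₂.1 (h₁ hx)
    obtain ⟨j, hj, hyj⟩ := Set.mem_iUnion₂.1 (h₂ J hJ hy)
    exact Set.mem_iUnion.2 ⟨j, Set.mem_iInter₂.1 hxJ j hj, hyj⟩
end
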